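/- Let p be an odd prime, a, t nonnegative integers, and k a positive integer not divisible by p-1 with 2p^(2a+2+t) | k and t ≥ 1. Then p^t * B_{(k+p^a(p-1))p^t} ≡ p^(t+1) * B_{(k+p^a(p-1))p^(t-1)} (mod p^(2a+2t+1)), where B_n is the n-th Bernoulli number; equivalently, B_{(k+p^a(p-1))p^t} / ((k+p^a(p-1))p^t) ≡ B_{(k+p^a(p-1))p^(t-1)} / ((k+p^a(p-1))p^(t-1)) (mod p^(a+1)). -/

import Mathlib

/-! Fix `c` prime to `p`. Permuting the residues modulo `p ^ r` by `j ↦ c * j` and expanding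
`(c * j) ^ n` to first order around its remainder gives Voronoi's congruence. Divided by
`n * p ^ r`, it exhibits `(c ^ n - 1) * B_n / n` as a `p`-adic limit of integer sums whose terms
depend on `n` only through an exponent, so Euler's theorem makes these sums `p`-adically continuous
in `n`. If `p - 1 ∤ n`, then `c` can be chosen with `c ^ n - 1` a `p`-adic unit, and Kummer's
congruences follow. When `p ^ e ∣ m`, the indices `m * p` and `m` are congruent modulo
`φ (p ^ (e + 1))`, which gives `B_{mp} / (mp) ≡ B_m / m` modulo `p ^ (e + 1)`; the theorem is the
case `m = (k + p ^ a * (p - 1)) * p ^ (t - 1)`.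
-/

open Filter Finset Topology
open scoped Nat

section Voronoi

theorem sum_range_mul_mod {M : Type*} [AddCommMonoid M] {c N : ℕ} (hc : c.Coprime N) (f : ℕ → M) :
    ∑ j ∈ range N, f (c * j % N) = ∑ j ∈ range N, f j := by
  have maps : Set.MapsTo (c * · % N) (range N) (range N) := fun j hj ↦
    mem_coe.2 <| mem_range.2 <| Nat.mod_lt _ <| Nat.zero_lt_of_lt <| mem_range.1 hj
  have inj : Set.InjOn (c * · % N) (range N) := fun i hi j hj hij ↦
    (Nat.ModEq.cancel_left_of_coprime hc.symm hij).eq_of_lt_of_lt (mem_range.1 hi) (mem_range.1 hj)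
  exact sum_nbij (c * · % N) maps inj (surjOn_of_injOn_of_card_le _ maps inj le_rfl) fun _ _ ↦ rfl

/-- The sum `∑_{j < N} ⌊c j / N⌋ r_j ^ (n - 1)`, with `r_j` the remainder of `c j` modulo `N`, that
occurs in Voronoi's congruence. -/
def voronoiSum (c N n : ℕ) : ℕ :=
  ∑ j ∈ range N, (c * j / N) * (c * j % N) ^ (n - 1)

theorem voronoi_congruence {c N : ℕ} (hc : c.Coprime N) (n : ℕ) :
    ((c : ℤ) ^ n - 1) * ∑ j ∈ range N, (j : ℤ) ^ n ≡ n * N * voronoiSum c N n [ZMOD N ^ 2] := by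
  have expand (j : ℕ) : (c : ℤ) ^ n * (j : ℤ) ^ n - ((c * j % N : ℕ) : ℤ) ^ n ≡
      n * N * ((c * j / N : ℕ) * ((c * j % N : ℕ) : ℤ) ^ (n - 1)) [ZMOD N ^ 2] := by
    have division : (c * j : ℤ) = (c * j % N : ℕ) + N * (c * j / N : ℕ) := by
      exact_mod_cast (Nat.mod_add_div (c * j) N).symm
    have taylor := (Dvd.intro _ (mul_pow (N : ℤ) (c * j / N : ℕ) 2).symm).trans
      (sq_dvd_add_pow_sub_sub (N * (c * j / N : ℕ) : ℤ) (c * j % N : ℕ) n)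
    rw [← division, mul_pow] at taylor
    refine (Int.modEq_iff_dvd.2 (taylor.trans (dvd_of_eq ?_))).symm
    ring
  calc ((c : ℤ) ^ n - 1) * ∑ j ∈ range N, (j : ℤ) ^ n
      = ∑ j ∈ range N, ((c : ℤ) ^ n * (j : ℤ) ^ n - ((c * j % N : ℕ) : ℤ) ^ n) := by
        rw [sum_sub_distrib, sum_range_mul_mod hc fun j ↦ (j : ℤ) ^ n, ← mul_sum, sub_one_mul]
    _ ≡ ∑ j ∈ range N, n * N * ((c * j / N : ℕ) * ((c * j % N : ℕ) : ℤ) ^ (n - 1))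
        [ZMOD N ^ 2] := Int.ModEq.sum fun j _ ↦ expand j
    _ = n * N * voronoiSum c N n := by rw [← mul_sum, voronoiSum]; push_cast; rfl

end Voronoi

section Euler

theorem pow_modEq_pow_of_modEq_totient {p r m n : ℕ} (hp : p.Prime) (hrm : r ≤ m) (hrn : r ≤ n)
    (h : m ≡ n [MOD φ (p ^ r)]) (x : ℕ) : x ^ m ≡ x ^ n [MOD p ^ r] := by
  by_cases hx : p ∣ x
  · have vanish {i : ℕ} (hi : r ≤ i) : x ^ i ≡ 0 [MOD p ^ r] :=
      Nat.modEq_zero_iff_dvd.2 ((pow_dvd_pow p hi).trans (pow_dvd_pow_of_dvd hx i))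
    exact (vanish hrm).trans (vanish hrn).symm
  · have euler := Nat.ModEq.pow_totient ((hp.coprime_iff_not_dvd.2 hx).symm.pow_right r)
    rw [← ZMod.natCast_eq_natCast_iff] at euler ⊢
    push_cast at euler ⊢
    exact pow_eq_pow_of_modEq h euler

theorem voronoiSum_modEq_of_modEq_totient {p r m n : ℕ} (hp : p.Prime) (hrm : r < m) (hrn : r < n)
    (h : m ≡ n [MOD φ (p ^ r)]) (c N : ℕ) :
    voronoiSum c N m ≡ voronoiSum c N n [MOD p ^ r] := by
  have h' : m - 1 ≡ n - 1 [MOD φ (p ^ r)] := by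
    refine Nat.ModEq.add_right_cancel' 1 ?_
    rwa [Nat.sub_add_cancel (by lia), Nat.sub_add_cancel (by lia)]
  exact Nat.ModEq.sum fun j _ ↦
    (pow_modEq_pow_of_modEq_totient hp (by lia) (by lia) h' _).mul_left _

theorem mul_self_modEq_totient_of_pow_dvd {p e m : ℕ} (hp : p.Prime) (h : p ^ e ∣ m) :
    m * p ≡ m [MOD φ (p ^ (e + 1))] := by
  rw [Nat.totient_prime_pow_succ hp]
  refine ((Nat.modEq_iff_dvd' (Nat.le_mul_of_pos_right m hp.pos)).2 ?_).symm
  rw [← Nat.mul_sub_one]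
  exact mul_dvd_mul_right h _

theorem succ_lt_of_pow_dvd {p e m : ℕ} (hp : 2 < p) (hm : 1 < m) (h : p ^ e ∣ m) : e + 1 < m := by
  cases e with
  | zero => exact hm
  | succ e =>
    have : (e + 1) * 3 ≤ p ^ e * p := Nat.mul_le_mul (Nat.lt_pow_self (by lia)) hp
    have : p ^ e * p ≤ m := Nat.le_of_dvd (by lia) h
    lia

theorem not_sub_one_dvd_mul_pow {p n : ℕ} (hp : p.Prime) (h : ¬ (p - 1) ∣ n) (t : ℕ) :
    ¬ (p - 1) ∣ n * p ^ t := fun hd ↦ h <| Nat.Coprime.dvd_of_dvd_mul_right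
  (((Nat.coprime_self_sub_left hp.one_le).2 p.coprime_one_left).pow_right t) hd

end Euler

section PowerSums

theorem sum_range_pow_div {N : ℕ} (hN : N ≠ 0) (n : ℕ) :
    (∑ j ∈ range N, (j : ℚ) ^ n) / N =
      ∑ i ∈ range (n + 1), bernoulli i * (n + 1).choose i / (n + 1) * (N : ℚ) ^ (n - i) := by
  rw [sum_range_pow, sum_div]
  refine sum_congr rfl fun i hi ↦ ?_
  rw [Nat.succ_sub (mem_range_succ_iff.1 hi), pow_succ]
  field_simp

theorem tendsto_sum_range_pow_div {K ι : Type*} [Field K] [CharZero K] [TopologicalSpace K]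
    [IsTopologicalSemiring K] {l : Filter ι} {N : ι → ℕ} (hN : ∀ i, N i ≠ 0)
    (hlim : Tendsto (fun i ↦ (N i : K)) l (𝓝 0)) (n : ℕ) :
    Tendsto (fun i ↦ (∑ j ∈ range (N i), (j : K) ^ n) / N i) l (𝓝 (bernoulli n : K)) := by
  let P : Polynomial K := ∑ i ∈ range (n + 1),
    Polynomial.C ((bernoulli i * (n + 1).choose i / (n + 1) : ℚ) : K) * Polynomial.X ^ (n - i)
  have eval_P (x : K) : P.eval x =
      ∑ i ∈ range (n + 1), ((bernoulli i * (n + 1).choose i / (n + 1) : ℚ) : K) * x ^ (n - i) := by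
    simp [P, Polynomial.eval_finsetSum]
  have eval_zero : P.eval 0 = bernoulli n := by
    rw [eval_P, sum_range_succ, sum_eq_zero fun i hi ↦ by
      rw [zero_pow (Nat.sub_ne_zero_of_lt (mem_range.1 hi)), mul_zero]]
    push_cast [Nat.choose_succ_self_right]
    field_simp
    simp
  have eval_N (i : ι) : P.eval (N i : K) = (∑ j ∈ range (N i), (j : K) ^ n) / N i := by
    rw [eval_P]
    have faulhaber := congrArg (Rat.cast : ℚ → K) (sum_range_pow_div (hN i) n)
    push_cast at faulhaber ⊢
    exact faulhaber.symm
  rw [← eval_zero]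
  exact ((P.continuous.tendsto 0).comp hlim).congr eval_N

end PowerSums

section Padic

variable {p : ℕ} [hp : Fact p.Prime]

theorem norm_natCast_sub_le_iff_modEq {r a b : ℕ} :
    ‖(a : ℚ_[p]) - b‖ ≤ (p : ℝ) ^ (-r : ℤ) ↔ a ≡ b [MOD p ^ r] := by
  rw [Nat.ModEq.comm, Nat.modEq_iff_dvd, Nat.cast_pow, ← Padic.norm_int_le_pow_iff_dvd]
  push_cast
  rfl

theorem exists_coprime_norm_pow_sub_one_eq_one {n : ℕ} (hn : ¬ (p - 1) ∣ n) :
    ∃ c : ℕ, c.Coprime p ∧ ‖(c : ℚ_[p]) ^ n - 1‖ = 1 := by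
  obtain ⟨u, hu⟩ : ∃ u : (ZMod p)ˣ, u ^ n ≠ 1 := by
    by_contra! h
    exact hn (by simpa using (FiniteField.forall_pow_eq_one_iff (ZMod p) n).1 h)
  refine ⟨(u : ZMod p).val, ZMod.val_coe_unit_coprime u, ?_⟩
  have not_dvd : ¬ (p : ℤ) ∣ ((u : ZMod p).val : ℤ) ^ n - 1 := by
    rw [← ZMod.intCast_zmod_eq_zero_iff_dvd]
    push_cast
    rw [ZMod.natCast_zmod_val, sub_eq_zero]
    exact fun h ↦ hu (Units.ext (by simpa using h))
  exact_mod_cast Padic.norm_intCast_eq_one_iff.2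
    ((Nat.prime_iff_prime_int.1 hp.out).coprime_iff_not_dvd.2 not_dvd).symm

theorem tendsto_voronoiSum {c n : ℕ} (hc : c.Coprime p) (hn : n ≠ 0) :
    Tendsto (fun m ↦ (voronoiSum c (p ^ m) n : ℚ_[p])) atTop
      (𝓝 (((c : ℚ_[p]) ^ n - 1) * (bernoulli n / n : ℚ))) := by
  have n_ne : (n : ℚ_[p]) ≠ 0 := Nat.cast_ne_zero.2 hn
  have p_ne : (p : ℚ_[p]) ≠ 0 := Nat.cast_ne_zero.2 hp.out.ne_zero
  have pow_lim : Tendsto (fun m ↦ (p : ℚ_[p]) ^ m) atTop (𝓝 0) :=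
    tendsto_pow_atTop_nhds_zero_of_norm_lt_one Padic.norm_p_lt_one
  choose E hE using fun m ↦ (voronoi_congruence (hc.pow_right m) n).symm.dvd
  have error_lim : Tendsto (fun m ↦ (p : ℚ_[p]) ^ m * (E m : ℚ_[p])) atTop (𝓝 0) :=
    pow_lim.zero_mul_isBoundedUnder_le (isBoundedUnder_of ⟨1, fun m ↦ Padic.norm_int_le_one (E m)⟩)
  have power_lim := tendsto_sum_range_pow_div (K := ℚ_[p]) (N := fun m ↦ p ^ m)
    (fun m ↦ pow_ne_zero m hp.out.ne_zero) (by simpa using pow_lim) n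
  have main := ((power_lim.const_mul ((c : ℚ_[p]) ^ n - 1)).sub error_lim).div_const (n : ℚ_[p])
  have limit_eq : (((c : ℚ_[p]) ^ n - 1) * bernoulli n - 0) / n =
      ((c : ℚ_[p]) ^ n - 1) * (bernoulli n / n : ℚ) := by
    push_cast
    ring
  rw [← limit_eq]
  refine main.congr fun m ↦ ?_
  have voronoi := congrArg (Int.cast : ℤ → ℚ_[p]) (hE m)
  push_cast at voronoi ⊢
  field_simp
  linear_combination voronoi

theorem norm_bernoulli_div_le_one {n : ℕ} (hn : ¬ (p - 1) ∣ n) :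
    ‖((bernoulli n / n : ℚ) : ℚ_[p])‖ ≤ 1 := by
  obtain ⟨c, hc, unit⟩ := exists_coprime_norm_pow_sub_one_eq_one hn
  have n_ne : n ≠ 0 := fun h ↦ hn (h ▸ dvd_zero _)
  have bound : ‖((c : ℚ_[p]) ^ n - 1) * (bernoulli n / n : ℚ)‖ ≤ 1 :=
    le_of_tendsto' (tendsto_voronoiSum hc n_ne).norm fun m ↦ by
      exact_mod_cast Padic.norm_int_le_one (p := p) (voronoiSum c (p ^ m) n)
  rwa [norm_mul, unit, one_mul] at bound

theorem kummer_congruence {r m n : ℕ} (hn : ¬ (p - 1) ∣ n) (hrm : r + 1 < m) (hrn : r + 1 < n)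
    (h : m ≡ n [MOD φ (p ^ (r + 1))]) :
    ‖((bernoulli m / m : ℚ) : ℚ_[p]) - (bernoulli n / n : ℚ)‖ ≤ (p : ℝ) ^ (-(r + 1 : ℕ) : ℤ) := by
  have hm : ¬ (p - 1) ∣ m := by
    rw [Nat.totient_prime_pow_succ hp.out] at h
    rwa [h.dvd_iff (dvd_mul_left _ _)]
  obtain ⟨c, hc, unit⟩ := exists_coprime_norm_pow_sub_one_eq_one hn
  set x : ℚ_[p] := ((bernoulli m / m : ℚ) : ℚ_[p])
  set y : ℚ_[p] := ((bernoulli n / n : ℚ) : ℚ_[p])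
  have regularized : ‖((c : ℚ_[p]) ^ m - 1) * x - ((c : ℚ_[p]) ^ n - 1) * y‖ ≤
      (p : ℝ) ^ (-(r + 1 : ℕ) : ℤ) :=
    le_of_tendsto' ((tendsto_voronoiSum hc (by lia)).sub (tendsto_voronoiSum hc (by lia))).norm
      fun i ↦ norm_natCast_sub_le_iff_modEq.2
        (voronoiSum_modEq_of_modEq_totient hp.out hrm hrn h c (p ^ i))
  have factor : ‖((c : ℚ_[p]) ^ m - (c : ℚ_[p]) ^ n) * x‖ ≤ (p : ℝ) ^ (-(r + 1 : ℕ) : ℤ) := by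
    rw [norm_mul]
    refine (mul_le_of_le_one_right (norm_nonneg _) (norm_bernoulli_div_le_one hm)).trans ?_
    exact_mod_cast norm_natCast_sub_le_iff_modEq.2
      (pow_modEq_pow_of_modEq_totient hp.out hrm.le hrn.le h c)
  calc ‖x - y‖ = ‖((c : ℚ_[p]) ^ n - 1) * (x - y)‖ := by rw [norm_mul, unit, one_mul]
    _ = ‖((c : ℚ_[p]) ^ m - 1) * x - ((c : ℚ_[p]) ^ n - 1) * y +
          -(((c : ℚ_[p]) ^ m - (c : ℚ_[p]) ^ n) * x)‖ := by ring_nf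
    _ ≤ (p : ℝ) ^ (-(r + 1 : ℕ) : ℤ) :=
        (Padic.nonarchimedean _ _).trans (max_le regularized ((norm_neg _).trans_le factor))

end Padic

/-- Congruence of rational numbers modulo `p ^ r`, as a lower bound on the `p`-adic valuation of the
difference. Equality is a separate case because `padicValRat p 0 = 0`. -/
def PadicModEq (p r : ℕ) (x y : ℚ) : Prop :=
  x = y ∨ (r : ℤ) ≤ padicValRat p (x - y)

namespace PadicModEq

variable {p r s : ℕ} {x y : ℚ}

theorem mono (hrs : r ≤ s) (h : PadicModEq p s x y) : PadicModEq p r x y :=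
  h.imp_right (Nat.cast_le.2 hrs).trans

theorem iff_norm_le [hp : Fact p.Prime] :
    PadicModEq p r x y ↔ ‖(x : ℚ_[p]) - y‖ ≤ (p : ℝ) ^ (-r : ℤ) := by
  rcases eq_or_ne x y with rfl | hxy
  · simp [PadicModEq]
  · rw [PadicModEq, or_iff_right hxy, ← Rat.cast_sub, Padic.eq_padicNorm,
      padicNorm.eq_zpow_of_nonzero (sub_ne_zero.2 hxy)]
    push_cast
    rw [zpow_le_zpow_iff_right₀ (Nat.one_lt_cast.2 hp.out.one_lt), neg_le_neg_iff]

theorem natCast_mul [hp : Fact p.Prime] {m : ℕ} (hm : p ^ s ∣ m) (h : PadicModEq p r x y) :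
    PadicModEq p (s + r) (m * x) (m * y) := by
  have norm_m : ‖(m : ℚ_[p])‖ ≤ (p : ℝ) ^ (-s : ℤ) := by
    exact_mod_cast (Padic.norm_int_le_pow_iff_dvd (m : ℤ) s).2 (by exact_mod_cast hm)
  rw [iff_norm_le] at h ⊢
  push_cast
  rw [← mul_sub, norm_mul, neg_add, zpow_add₀ (Nat.cast_ne_zero.2 hp.out.ne_zero)]
  gcongr

end PadicModEq

theorem bernoulli_mul_prime_div_padicModEq {p e m : ℕ} (hp : p.Prime) (he : p ^ e ∣ m)
    (hm : ¬ (p - 1) ∣ m) (hm1 : m ≠ 1) :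
    PadicModEq p (e + 1) (bernoulli (m * p) / (m * p : ℕ)) (bernoulli m / m) := by
  have : Fact p.Prime := ⟨hp⟩
  have m_ne : m ≠ 0 := fun h ↦ hm (h ▸ dvd_zero _)
  have p_ne : p ≠ 2 := fun h ↦ hm (h ▸ one_dvd m)
  have small : e + 1 < m := succ_lt_of_pow_dvd (hp.two_le.lt_of_ne' p_ne) (by lia) he
  exact PadicModEq.iff_norm_le.2 <| kummer_congruence hm
    (small.trans_le (Nat.le_mul_of_pos_right m hp.pos)) small
    (mul_self_modEq_totient_of_pow_dvd hp he)

theorem branching_congruence_general {p : ℕ} (hp : p.Prime) {a n : ℕ} (ha : p ^ a ∣ n)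
    (hn : ¬ (p - 1) ∣ n) (hn1 : n ≠ 1) (t : ℕ) :
    PadicModEq p (2 * a + 3 * (t + 1)) ((p : ℚ) ^ (t + 1) * bernoulli (n * p ^ (t + 1)))
      ((p : ℚ) ^ (t + 2) * bernoulli (n * p ^ t)) ∧
    PadicModEq p (a + t + 1) (bernoulli (n * p ^ (t + 1)) / (n * p ^ (t + 1) : ℕ))
      (bernoulli (n * p ^ t) / (n * p ^ t : ℕ)) := by
  have : Fact p.Prime := ⟨hp⟩
  have quotients := bernoulli_mul_prime_div_padicModEq hp
    (pow_add p a t ▸ mul_dvd_mul_right ha (p ^ t)) (not_sub_one_dvd_mul_pow hp hn t)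
    fun h ↦ hn1 (Nat.eq_one_of_mul_eq_one_right h)
  rw [mul_assoc, ← pow_succ] at quotients
  refine ⟨?_, quotients⟩
  have dvd : p ^ (a + 2 * (t + 1)) ∣ n * p ^ (2 * (t + 1)) :=
    pow_add p a (2 * (t + 1)) ▸ mul_dvd_mul_right ha _
  have n_ne : (n : ℚ) ≠ 0 := Nat.cast_ne_zero.2 fun h ↦ hn (h ▸ dvd_zero _)
  have p_ne : (p : ℚ) ≠ 0 := Nat.cast_ne_zero.2 hp.ne_zero
  convert quotients.natCast_mul dvd using 1
  · ring
  · push_cast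
    field_simp
    ring
  · push_cast
    field_simp
    ring

theorem branching_congruence (p : ℕ) (hp : p.Prime) (hodd : Odd p)
    (a t : ℕ) (ht : 1 ≤ t) (k : ℕ) (hk : 0 < k) (hnd : ¬ (p - 1) ∣ k)
    (hdvd : 2 * p ^ (2 * a + 2 + t) ∣ k) :
    ((p : ℚ) ^ t * bernoulli ((k + p ^ a * (p - 1)) * p ^ t) =
        (p : ℚ) ^ (t + 1) * bernoulli ((k + p ^ a * (p - 1)) * p ^ (t - 1)) ∨
      ((2 * a + 2 * t + 1 : ℕ) : ℤ) ≤ padicValRat p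
        ((p : ℚ) ^ t * bernoulli ((k + p ^ a * (p - 1)) * p ^ t) -
          (p : ℚ) ^ (t + 1) * bernoulli ((k + p ^ a * (p - 1)) * p ^ (t - 1)))) ∧
    (bernoulli ((k + p ^ a * (p - 1)) * p ^ t) / (((k + p ^ a * (p - 1)) * p ^ t : ℕ) : ℚ) =
        bernoulli ((k + p ^ a * (p - 1)) * p ^ (t - 1)) /
          (((k + p ^ a * (p - 1)) * p ^ (t - 1) : ℕ) : ℚ) ∨
      ((a + 1 : ℕ) : ℤ) ≤ padicValRat p
        (bernoulli ((k + p ^ a * (p - 1)) * p ^ t) / (((k + p ^ a * (p - 1)) * p ^ t : ℕ) : ℚ) -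
          bernoulli ((k + p ^ a * (p - 1)) * p ^ (t - 1)) /
            (((k + p ^ a * (p - 1)) * p ^ (t - 1) : ℕ) : ℚ))) := by
  obtain ⟨t, rfl⟩ := Nat.exists_eq_add_of_le' ht
  have dvd_k : p ^ a ∣ k := (pow_dvd_pow p (by lia)).trans ((dvd_mul_left _ 2).trans hdvd)
  have hn : ¬ (p - 1) ∣ k + p ^ a * (p - 1) := by rwa [Nat.dvd_add_left (dvd_mul_left _ _)]
  have : 0 < p ^ a * (p - 1) := Nat.mul_pos (pow_pos hp.pos a) (Nat.sub_pos_of_lt hp.one_lt)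
  obtain ⟨products, quotients⟩ := branching_congruence_general hp
    (dvd_add dvd_k (dvd_mul_right _ _)) hn (by lia) t
  exact ⟨products.mono (by lia), quotients.mono (by lia)⟩
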